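/- arXiv:2111.01235 — 3 statements merged into one kernel-verified Lean document; each statement's English description precedes it below -/
import Mathlib

section
/- Let N ≥ 2 and M ≥ 1, let Cb : Fin N → Fin M → ℝ and C : Fin N → Fin M → ℝ be the best-set and candidate cost matrices, and fix indices p q : Fin N. Let R_p ⊆ Fin M be the set of cost-function indices r for which row p attains the minimum of column r of Cb (i.e., Cb p r ≤ Cb i r for all i), and define the benefit B(p,q) = ∑_{r ∈ R_p} (Cb p r − min (C q r) (min_{i ≠ p} Cb i r)). Let Cb' be the matrix obtained from Cb by replacing row p with row q of C (Cb' = Function.update Cb p (C q)). Then EMC(Cb') ≤ EMC(Cb) − B(p,q)/M, where EMC(A) = (1/M)·∑_{j : Fin M} (min_{i : Fin N} A i j). (Correctness of the benefit computation of Algorithm 4: the computed benefit is a lower bound on the actual reduction in Expected Minimum Cost from a single row swap.) -/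
/-- Expected Minimum Cost of a recourse-set cost matrix `A : Fin N → Fin M → ℝ`:
the average over the `M` cost-function samples of the minimum cost over the
`N` counterfactuals. -/
noncomputable def EMC {N M : ℕ} (hN : 1 ≤ N) (A : Fin N → Fin M → ℝ) : ℝ :=
  (1 / (M : ℝ)) *
    ∑ j : Fin M, Finset.univ.inf' ⟨⟨0, hN⟩, Finset.mem_univ _⟩ (fun i => A i j)

/-- `min_{i ≠ p} Cb i r`: the minimum cost in column `r` of `Cb` over all rows
other than `p` (nonempty since `N ≥ 2`). -/
noncomputable def minOther {N M : ℕ} (hN : 2 ≤ N) (Cb : Fin N → Fin M → ℝ)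
    (p : Fin N) (r : Fin M) : ℝ :=
  (Finset.univ.erase p).inf'
    (Finset.card_pos.mp (by
      rw [Finset.card_erase_of_mem (Finset.mem_univ p), Finset.card_univ,
        Fintype.card_fin]
      omega))
    (fun i => Cb i r)

/-- The benefit `B(p,q)` computed by Algorithm 4: the sum, over the
cost-function indices `r` for which row `p` attains the minimum of column `r`
of `Cb`, of `Cb p r − min (C q r) (min_{i ≠ p} Cb i r)`. -/
noncomputable def benefit {N M : ℕ} (hN : 2 ≤ N) (Cb C : Fin N → Fin M → ℝ)
    (p q : Fin N) : ℝ :=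
  ∑ r ∈ Finset.univ.filter (fun r : Fin M => ∀ i : Fin N, Cb p r ≤ Cb i r),
    (Cb p r - min (C q r) (minOther hN Cb p r))

/-- Correctness of the benefit computation of Algorithm 4: the computed benefit
`B(p,q)` is a lower bound on the actual reduction in Expected Minimum Cost from
replacing row `p` of the best-set matrix `Cb` with row `q` of the candidate
matrix `C`. -/
theorem benefit_le_emc_reduction {N M : ℕ} (hN : 2 ≤ N) (hM : 1 ≤ M)
    (Cb C : Fin N → Fin M → ℝ) (p q : Fin N) :
    EMC (by omega) (Function.update Cb p (C q)) ≤
      EMC (by omega) Cb - benefit hN Cb C p q / (M : ℝ) := by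
  have key : ∀ r : Fin M,
      Finset.univ.inf' ⟨⟨0, by omega⟩, Finset.mem_univ _⟩
          (fun i => Function.update Cb p (C q) i r) ≤
        Finset.univ.inf' ⟨⟨0, by omega⟩, Finset.mem_univ _⟩ (fun i => Cb i r) -
          (if ∀ i : Fin N, Cb p r ≤ Cb i r then
            Cb p r - min (C q r) (minOther hN Cb p r) else 0) := by
    intro r
    have hother : ∀ i, i ≠ p → Finset.univ.inf' ⟨⟨0, by omega⟩, Finset.mem_univ _⟩
          (fun i => Function.update Cb p (C q) i r) ≤ Cb i r := by
      intro i hi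
      have h := Finset.inf'_le (fun i => Function.update Cb p (C q) i r) (Finset.mem_univ i)
      simpa [Function.update_of_ne hi] using h
    have hp : Finset.univ.inf' ⟨⟨0, by omega⟩, Finset.mem_univ _⟩
          (fun i => Function.update Cb p (C q) i r) ≤ C q r := by
      have h := Finset.inf'_le (fun i => Function.update Cb p (C q) i r) (Finset.mem_univ p)
      simpa only [Function.update_self] using h
    split_ifs with h
    · have h1 : Cb p r ≤ Finset.univ.inf' ⟨⟨0, by omega⟩, Finset.mem_univ _⟩
          (fun i => Cb i r) := Finset.le_inf' _ _ (fun i _ => h i)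
      have h2 : Finset.univ.inf' ⟨⟨0, by omega⟩, Finset.mem_univ _⟩
          (fun i => Function.update Cb p (C q) i r) ≤ min (C q r) (minOther hN Cb p r) := by
        refine le_min hp ?_
        unfold minOther
        exact Finset.le_inf' _ _ (fun i hi => hother i (Finset.ne_of_mem_erase hi))
      linarith
    · rw [sub_zero]
      push Not at h
      obtain ⟨k, hk⟩ := h
      refine Finset.le_inf' _ _ (fun i _ => ?_)
      by_cases hi : i = p
      · subst hi
        exact (hother k (by rintro rfl; exact lt_irrefl _ hk)).trans hk.le
      · exact hother i hi
  have hsum := Finset.sum_le_sum (fun r (_ : r ∈ (Finset.univ : Finset (Fin M))) => key r)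
  rw [Finset.sum_sub_distrib, ← Finset.sum_filter] at hsum
  unfold EMC benefit
  rw [one_div, div_eq_inv_mul, ← mul_sub]
  exact mul_le_mul_of_nonneg_left hsum (by positivity)
end

section
/- Let N ≥ 2 and M ≥ 1, let Cb : Fin N → Fin M → ℝ and C : Fin N → Fin M → ℝ be the best-set and candidate cost matrices. Suppose there exist indices p q : Fin N such that the benefit B(p,q) = ∑_{r ∈ R_p} (Cb p r − min (C q r) (min_{i ≠ p} Cb i r)) is strictly positive, where R_p ⊆ Fin M is the set of indices r for which Cb p r ≤ Cb i r for all i. Then there exists a matrix Cb' differing from Cb in exactly one row, with that row taken from C, such that EMC(Cb') < EMC(Cb), where EMC(A) = (1/M)·∑_{j : Fin M} (min_{i : Fin N} A i j). (A single swap with strictly positive computed benefit strictly decreases the Expected Minimum Cost.) -/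
lemma inf_update_eq {N M : ℕ} (hN : 2 ≤ N) (hN' : 1 ≤ N) (A B : Fin N → Fin M → ℝ)
    (p : Fin N) (hAB : ∀ i, i ≠ p → B i = A i) (j : Fin M) :
    Finset.univ.inf' ⟨⟨0, hN'⟩, Finset.mem_univ _⟩ (fun i => B i j) =
      min (B p j) (minOther hN A p j) := by
  unfold minOther
  apply le_antisymm
  · refine le_min (Finset.inf'_le (fun i => B i j) (Finset.mem_univ p)) ?_
    refine Finset.le_inf' _ _ fun i hi => ?_
    rw [← hAB i (Finset.ne_of_mem_erase hi)]
    exact Finset.inf'_le (fun i => B i j) (Finset.mem_univ i)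
  · refine Finset.le_inf' _ _ fun i _ => ?_
    by_cases hi : i = p
    · subst hi
      exact min_le_left _ _
    · rw [hAB i hi]
      exact (min_le_right _ _).trans
        (Finset.inf'_le (fun i => A i j) (Finset.mem_erase.mpr ⟨hi, Finset.mem_univ i⟩))

/-- A single swap with strictly positive computed benefit strictly decreases
the Expected Minimum Cost: if some pair `(p, q)` has `B(p,q) > 0`, then there
exists a matrix `Cb'` differing from `Cb` in exactly one row, with that row
taken from `C`, such that `EMC Cb' < EMC Cb`. -/
theorem exists_strict_emc_decrease {N M : ℕ} (hN : 2 ≤ N) (hM : 1 ≤ M)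
    (Cb C : Fin N → Fin M → ℝ)
    (h : ∃ p q : Fin N, 0 < benefit hN Cb C p q) :
    ∃ Cb' : Fin N → Fin M → ℝ,
      (∃ p : Fin N, Cb' p ≠ Cb p ∧ (∀ i : Fin N, i ≠ p → Cb' i = Cb i) ∧
        ∃ q : Fin N, Cb' p = C q) ∧
      EMC (by omega) Cb' < EMC (by omega) Cb := by
  obtain ⟨p, q, hb⟩ := h
  have hlt : EMC (by omega) (Function.update Cb p (C q)) < EMC (by omega) Cb := by
    unfold EMC
    have hMpos : (0 : ℝ) < 1 / (M : ℝ) := by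
      have : (0 : ℝ) < M := by exact_mod_cast hM
      positivity
    refine mul_lt_mul_of_pos_left ?_ hMpos
    rw [← sub_pos, ← Finset.sum_sub_distrib]
    refine lt_of_lt_of_le hb ?_
    unfold benefit
    rw [Finset.sum_filter]
    refine Finset.sum_le_sum fun r _ => ?_
    rw [inf_update_eq hN (by omega) Cb (Function.update Cb p (C q)) p
        (fun i hi => Function.update_of_ne hi _ _) r,
      inf_update_eq hN (by omega) Cb Cb p (fun _ _ => rfl) r, Function.update_self]
    have hle : (∀ i, Cb p r ≤ Cb i r) ↔ Cb p r ≤ minOther hN Cb p r := by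
      unfold minOther
      rw [Finset.le_inf'_iff]
      refine ⟨fun h i _ => h i, fun h i => ?_⟩
      by_cases hi : i = p
      · rw [hi]
      · exact h i (Finset.mem_erase.mpr ⟨hi, Finset.mem_univ i⟩)
    split_ifs with hr
    · rw [min_eq_left (hle.mp hr)]
    · rw [hle, not_le] at hr
      rw [min_eq_right hr.le]
      exact sub_nonneg.mpr (min_le_right _ _)
  refine ⟨Function.update Cb p (C q), ⟨p, ?_, fun i hi => Function.update_of_ne hi _ _, q,
    Function.update_self _ _ _⟩, hlt⟩
  intro heq
  rw [Function.update_self] at heq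
  rw [heq, Function.update_eq_self] at hlt
  exact lt_irrefl _ hlt
end

section
/- Let X be a finite nonempty type (the space of feasible counterfactuals), let M ≥ 1, and let C : Fin M → X → ℝ assign to each of the M sampled cost functions the cost of each counterfactual. For a nonempty finite set S ⊆ X define EMC(S) = (1/M)·∑_{i : Fin M} (min_{s ∈ S} C i s). Then there exists a nonempty finite set S ⊆ X with cardinality at most M such that EMC(S) ≤ EMC(T) for every nonempty finite T ⊆ X; namely, a set containing for each i a minimizer of C i over X attains the global minimum (1/M)·∑_{i : Fin M} (min_{x : X} C i x) of EMC. (Remark 1: with set size at most the number of cost-function samples, the optimum Expected Minimum Cost is attained.) -/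
/-- Expected Minimum Cost of a nonempty finite recourse set `S ⊆ X` under `M`
sampled cost functions `C : Fin M → X → ℝ`: the average over the cost-function
samples of the minimum cost over the counterfactuals in `S`. -/
noncomputable def EMCset {X : Type*} {M : ℕ} (C : Fin M → X → ℝ)
    (S : Finset X) (hS : S.Nonempty) : ℝ :=
  (1 / (M : ℝ)) * ∑ i : Fin M, S.inf' hS (C i)

/-- Remark 1: with set size at most the number `M` of cost-function samples,
the optimum Expected Minimum Cost is attained. Namely, there is a nonempty set
`S` of cardinality at most `M`, containing for each `i` a minimizer of `C i`
over `X`, such that `EMC S ≤ EMC T` for every nonempty finite `T ⊆ X`, and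
`EMC S` equals the global minimum `(1/M) · ∑_i min_{x : X} C i x`. -/
theorem exists_optimal_recourse_set {X : Type*} [Fintype X] [Nonempty X]
    {M : ℕ} (hM : 1 ≤ M) (C : Fin M → X → ℝ) :
    ∃ (S : Finset X) (hS : S.Nonempty),
      S.card ≤ M ∧
      (∀ i : Fin M, ∃ x ∈ S,
        C i x = Finset.univ.inf' Finset.univ_nonempty (C i)) ∧
      (∀ (T : Finset X) (hT : T.Nonempty), EMCset C S hS ≤ EMCset C T hT) ∧
      EMCset C S hS =
        (1 / (M : ℝ)) * ∑ i : Fin M, Finset.univ.inf' Finset.univ_nonempty (C i) := by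
  classical
  have hex : ∀ i : Fin M, ∃ x : X,
      C i x = Finset.univ.inf' Finset.univ_nonempty (C i) := by
    intro i
    obtain ⟨x, _, hx⟩ := Finset.exists_mem_eq_inf' Finset.univ_nonempty (C i)
    exact ⟨x, hx.symm⟩
  choose f hf using hex
  have hS : (Finset.univ.image f).Nonempty := ⟨f ⟨0, hM⟩, by simp⟩
  have hmin : ∀ (T : Finset X) (hT : T.Nonempty) (i : Fin M),
      Finset.univ.inf' Finset.univ_nonempty (C i) ≤ T.inf' hT (C i) :=
    fun T hT i => Finset.inf'_mono (C i) (Finset.subset_univ T) hT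
  have heq : EMCset C (Finset.univ.image f) hS =
      (1 / (M : ℝ)) * ∑ i : Fin M, Finset.univ.inf' Finset.univ_nonempty (C i) := by
    unfold EMCset
    congr 1
    refine Finset.sum_congr rfl fun i _ => le_antisymm ?_ (hmin _ hS i)
    rw [← hf i]
    exact Finset.inf'_le (C i) (Finset.mem_image_of_mem f (Finset.mem_univ i))
  refine ⟨Finset.univ.image f, hS, ?_, ?_, ?_, heq⟩
  · simpa using (Finset.card_image_le (s := Finset.univ) (f := f))
  · exact fun i => ⟨f i, Finset.mem_image_of_mem f (Finset.mem_univ i), hf i⟩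
  · intro T hT
    rw [heq]
    unfold EMCset
    exact mul_le_mul_of_nonneg_left (Finset.sum_le_sum fun i _ => hmin T hT i) (by positivity)
end
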